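/- Suppose there exists a total integral α : A → B (i.e. the action is tame). Then the functor of invariants on (B,A)-modules is exact: for every short exact sequence 0 → M₁ → M₂ → M₃ → 0 of (B,A)-modules (the maps being morphisms of (B,A)-modules and the sequence exact as a sequence of R-modules), the induced sequence of invariants 0 → M₁^A → M₂^A → M₃^A → 0 is exact. -/

import Mathlib

open TensorProduct

section ComodDefs

variable (R A : Type*) [CommRing R] [CommRing A] [HopfAlgebra R A]

/-- `ρ : M →ₗ[R] M ⊗[R] A` is a right `A`-comodule structure on `M`:
coassociativity and counitality. -/
def IsComodule {M : Type*} [AddCommGroup M] [Module R M]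
    (ρ : M →ₗ[R] M ⊗[R] A) : Prop :=
  ((TensorProduct.assoc R M A A).toLinearMap ∘ₗ ρ.rTensor A ∘ₗ ρ
      = (LinearMap.lTensor M (Coalgebra.comul (R := R) (A := A))) ∘ₗ ρ)
  ∧ ((TensorProduct.rid R M).toLinearMap
      ∘ₗ (LinearMap.lTensor M (Coalgebra.counit (R := R) (A := A))) ∘ₗ ρ = LinearMap.id)

/-- The invariants `M^A = {m : M | ρ m = m ⊗ 1}` of a comodule. -/
def comodInvariants {M : Type*} [AddCommGroup M] [Module R M]
    (ρ : M →ₗ[R] M ⊗[R] A) : Set M :=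
  {m : M | ρ m = m ⊗ₜ[R] (1 : A)}

/-- `α : A → B` is a total integral for the comodule algebra `(B, ρB)`:
a unitary morphism of `A`-comodules. -/
def IsTotalIntegral {B : Type*} [CommRing B] [Algebra R B]
    (ρB : B →ₐ[R] B ⊗[R] A) (α : A →ₗ[R] B) : Prop :=
  α 1 = 1 ∧ ρB.toLinearMap ∘ₗ α
    = (α.rTensor A) ∘ₗ (Coalgebra.comul (R := R) (A := A))

variable (B : Type*) [CommRing B] [Algebra R B]
variable (M : Type*) [AddCommGroup M] [Module R M] [Module B M] [IsScalarTower R B M]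

/-- Scalar multiplication by `b : B` on `M`, as an `R`-linear map. -/
def bsmul (b : B) : M →ₗ[R] M where
  toFun m := b • m
  map_add' := smul_add b
  map_smul' r m := smul_comm b r m

/-- The action of `B ⊗[R] A` on `M ⊗[R] A` (`B` acting on the first factor, `A` by
multiplication on the second). -/
noncomputable def tensorAction : (B ⊗[R] A) →ₗ[R] (M ⊗[R] A) →ₗ[R] (M ⊗[R] A) :=
  TensorProduct.lift <| LinearMap.mk₂ R
    (fun b a => TensorProduct.map (bsmul R B M b) (LinearMap.mulLeft R a))
    (fun b₁ b₂ a => by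
      have h : bsmul R B M (b₁ + b₂) = bsmul R B M b₁ + bsmul R B M b₂ :=
        LinearMap.ext fun m => add_smul b₁ b₂ m
      simp only [h, TensorProduct.map_add_left])
    (fun r b a => by
      have h : bsmul R B M (r • b) = r • bsmul R B M b :=
        LinearMap.ext fun m => smul_assoc r b m
      simp only [h, TensorProduct.map_smul_left])
    (fun b a₁ a₂ => by
      have h : LinearMap.mulLeft R (a₁ + a₂)
          = LinearMap.mulLeft R a₁ + LinearMap.mulLeft R a₂ :=
        LinearMap.ext fun x => add_mul a₁ a₂ x
      simp only [h, TensorProduct.map_add_right])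
    (fun r b a => by
      have h : LinearMap.mulLeft R (r • a) = r • LinearMap.mulLeft R a :=
        LinearMap.ext fun x => smul_mul_assoc r a x
      simp only [h, TensorProduct.map_smul_right])

/-- `(M, ρM)` is a `(B,A)`-module over the comodule algebra `(B, ρB)`: a `B`-module and
a right `A`-comodule whose coaction is `B`-linear, i.e. `ρM (b • m) = ρB b • ρM m`. -/
def IsBAModule (ρB : B →ₐ[R] B ⊗[R] A) (ρM : M →ₗ[R] M ⊗[R] A) : Prop :=
  IsComodule R A ρM ∧
    ∀ (b : B) (m : M), ρM (b • m) = tensorAction R A B M (ρB b) (ρM m)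

/-- The action map `M ⊗[R] B →ₗ[R] M`, `m ⊗ b ↦ b • m`. -/
noncomputable def smulMB : M ⊗[R] B →ₗ[R] M :=
  TensorProduct.lift <| LinearMap.mk₂ R (fun m b => b • m)
    (fun m₁ m₂ b => smul_add b m₁ m₂)
    (fun r m b => smul_comm b r m)
    (fun m b₁ b₂ => add_smul b₁ b₂ m)
    (fun r m b => smul_assoc r b m)

/-- The Reynolds operator `pr_M : M → M`, `m ↦ Σ α (S m₍₁₎) • m₍₀₎`: the composite of
`ρ_M : M → M ⊗ A`, then `id_M ⊗ (α ∘ S) : M ⊗ A → M ⊗ B`, then the `B`-action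
`M ⊗ B → M`. -/
noncomputable def reynolds (α : A →ₗ[R] B) (ρM : M →ₗ[R] M ⊗[R] A) : M →ₗ[R] M :=
  smulMB R B M ∘ₗ (LinearMap.lTensor M (α ∘ₗ HopfAlgebra.antipode (R := R))) ∘ₗ ρM

end ComodDefs

/-!
The Reynolds operator `m ↦ Σ α (S m₍₁₎) • m₍₀₎` is a projection of every `(B,A)`-module `M` onto its
invariants, natural in `M`. It fixes invariants because `α 1 = 1`; its values are invariant because
`α` is colinear and `S` reverses the comultiplication, so that
`ρ (Σ α (S m₍₁₎) • m₍₀₎) = Σ α (S m₍₃₎) • m₍₀₎ ⊗ S m₍₂₎ * m₍₁₎ = Σ α (S m₍₁₎) • m₍₀₎ ⊗ 1`.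
Hence an invariant element in the image of a morphism is already the image of an invariant one,
namely of the projection of any of its preimages.
-/

section Antipode

open Coalgebra HopfAlgebra WithConv

variable {R A : Type*} [CommSemiring R] [Semiring A] [HopfAlgebra R A]

theorem comp_antipode_convMul_self {C : Type*} [Semiring C] [Algebra R C] (φ : A →ₐ[R] C) :
    toConv (φ.toLinearMap ∘ₗ antipode R) * toConv φ.toLinearMap = 1 := by
  have h := LinearMap.algHom_comp_convMul_distrib φ (toConv (antipode R (A := A)))
    (toConv LinearMap.id)
  rw [LinearMap.antipode_mul_id] at h
  refine WithConv.ext (h.symm.trans ?_)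
  ext a
  simp [LinearMap.convOne_def]

-- Both sides are convolution inverses of `comul`, which is itself the convolution product
-- of the two inclusions `A → A ⊗[R] A`.
theorem comul_comp_antipode :
    comul (R := R) ∘ₗ antipode R (A := A) =
      TensorProduct.map (antipode R) (antipode R) ∘ₗ
        (TensorProduct.comm R A A).toLinearMap ∘ₗ comul (R := R) := by
  let ι₁ : A →ₐ[R] A ⊗[R] A := Algebra.TensorProduct.includeLeft
  let ι₂ : A →ₐ[R] A ⊗[R] A := Algebra.TensorProduct.includeRight
  have comul_eq : toConv (comul (R := R) (A := A)) =
      toConv ι₁.toLinearMap * toConv ι₂.toLinearMap := by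
    ext a
    simp [(ℛ R a).convMul_apply, ι₁, ι₂, (ℛ R a).eq]
  have map_eq : toConv (TensorProduct.map (antipode R) (antipode R) ∘ₗ
        (TensorProduct.comm R A A).toLinearMap ∘ₗ comul) =
      toConv (ι₂.toLinearMap ∘ₗ antipode R) * toConv (ι₁.toLinearMap ∘ₗ antipode R) := by
    ext a
    simp [(ℛ R a).convMul_apply, ι₁, ι₂, ← (ℛ R a).eq]
  refine (toConv_injective (left_inv_eq_right_inv ?_ LinearMap.comul_right_inv)).symm
  rw [map_eq, comul_eq, mul_assoc, ← mul_assoc (toConv (ι₁.toLinearMap ∘ₗ _)),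
    comp_antipode_convMul_self, one_mul, comp_antipode_convMul_self]

theorem comul_antipode_eq_sum {ι : Type*} {a : A} (r : Coalgebra.Repr R a ι) :
    comul (antipode R a) = ∑ i ∈ r.index, antipode R (r.right i) ⊗ₜ[R] antipode R (r.left i) := by
  simpa [← r.eq] using LinearMap.congr_fun (comul_comp_antipode (R := R)) a

-- In Sweedler notation: `Σ a₁ * S a₂ ⊗ a₃ = 1 ⊗ a`.
theorem rTensor_mul_antipode_comul_comul (a : A) :
    (LinearMap.mul' R A ∘ₗ (antipode R).lTensor A).rTensor A
      ((TensorProduct.assoc R A A A).symm (comul.lTensor A (comul (R := R) a))) = 1 ⊗ₜ[R] a := by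
  rw [← coassoc_apply, LinearEquiv.symm_apply_apply, ← LinearMap.rTensor_comp_apply,
    LinearMap.comp_assoc, mul_antipode_lTensor_comul, LinearMap.rTensor_comp_apply,
    rTensor_counit_comul]
  simp

end Antipode

section AntipodeAction

open Coalgebra HopfAlgebra

section Semiring

variable {R A V N N' : Type*} [CommSemiring R] [Semiring A] [HopfAlgebra R A]
  [AddCommMonoid V] [Module R V] [AddCommMonoid N] [Module R N] [AddCommMonoid N'] [Module R N']

/-- The map `n ⊗ a ↦ β (α (S a)) n`, where `β` is a family of operators on `N`. Composed with a
coaction it gives the Reynolds operator; `β` is a variable because the invariance proof also needs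
the family of operators on `M ⊗[R] A` induced by a `B`-module structure on `M`. -/
noncomputable def antipodeAction (β : V →ₗ[R] Module.End R N) (α : A →ₗ[R] V) :
    N ⊗[R] A →ₗ[R] N :=
  TensorProduct.lift (β ∘ₗ α ∘ₗ antipode R).flip

@[simp]
theorem antipodeAction_tmul (β : V →ₗ[R] Module.End R N) (α : A →ₗ[R] V) (n : N) (a : A) :
    antipodeAction β α (n ⊗ₜ a) = β (α (antipode R a)) n :=
  rfl

theorem map_antipodeAction {β : V →ₗ[R] Module.End R N} {β' : V →ₗ[R] Module.End R N'}
    (φ : N →ₗ[R] N') (hφ : ∀ v n, φ (β v n) = β' v (φ n)) (α : A →ₗ[R] V) (t : N ⊗[R] A) :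
    φ (antipodeAction β α t) = antipodeAction β' α (φ.rTensor A t) := by
  induction t with
  | zero => simp
  | add t u ht hu => simp only [map_add, ht, hu]
  | tmul n a => simp [hφ]

end Semiring

variable {R A B M : Type*} [CommRing R] [CommRing A] [HopfAlgebra R A]
  [CommRing B] [Algebra R B] [AddCommGroup M] [Module R M] [Module B M] [IsScalarTower R B M]
  {ρB : B →ₐ[R] B ⊗[R] A} {α : A →ₗ[R] B}

@[simp]
theorem tensorAction_tmul_tmul (b : B) (a : A) (m : M) (c : A) :
    tensorAction R A B M (b ⊗ₜ a) (m ⊗ₜ c) = (b • m) ⊗ₜ (a * c) :=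
  rfl

theorem IsTotalIntegral.tensorAction_antipode (hα : IsTotalIntegral R A ρB α) {ι : Type*} {a : A}
    (r : Coalgebra.Repr R a ι) (m : M) (c : A) :
    tensorAction R A B M (ρB (α (antipode R a))) (m ⊗ₜ c) =
      ∑ i ∈ r.index, (α (antipode R (r.right i)) • m) ⊗ₜ[R] (antipode R (r.left i) * c) := by
  have colinear : ρB (α (antipode R a)) = α.rTensor A (comul (antipode R a)) :=
    LinearMap.congr_fun hα.2 (antipode R a)
  simp [colinear, comul_antipode_eq_sum r, LinearMap.sum_apply]

-- At `z = c ⊗ a` both sides are `Σ α (S a₂) • m ⊗ S a₁ * c`;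
-- the right-hand side is arranged so that `rTensor_mul_antipode_comul_comul` evaluates it at
-- `z = comul a`.
theorem IsTotalIntegral.antipodeAction_assoc_symm (hα : IsTotalIntegral R A ρB α) (m : M)
    (z : A ⊗[R] A) :
    antipodeAction (tensorAction R A B M ∘ₗ ρB.toLinearMap) α
        ((TensorProduct.assoc R M A A).symm (m ⊗ₜ z)) =
      TensorProduct.comm R A M
        (((LinearMap.toSpanSingleton B M m).restrictScalars R ∘ₗ α ∘ₗ antipode R).lTensor A
          ((LinearMap.mul' R A ∘ₗ (antipode R).lTensor A).rTensor A
            ((TensorProduct.assoc R A A A).symm (comul.lTensor A z)))) := by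
  induction z with
  | zero => simp
  | add z w hz hw => simp only [map_add, TensorProduct.tmul_add, hz, hw]
  | tmul c a =>
    have h := hα.tensorAction_antipode (ℛ R a) m c
    simp [h, ← (ℛ R a).eq, TensorProduct.tmul_sum, mul_comm c]

theorem IsTotalIntegral.antipodeAction_lTensor_comul (hα : IsTotalIntegral R A ρB α)
    (t : M ⊗[R] A) :
    antipodeAction (tensorAction R A B M ∘ₗ ρB.toLinearMap) α
        ((TensorProduct.assoc R M A A).symm (comul.lTensor M t)) =
      antipodeAction (Algebra.lsmul R R M).toLinearMap α t ⊗ₜ[R] 1 := by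
  induction t with
  | zero => simp
  | add t u ht hu => simp only [map_add, TensorProduct.add_tmul, ht, hu]
  | tmul m a =>
    rw [LinearMap.lTensor_tmul, hα.antipodeAction_assoc_symm, rTensor_mul_antipode_comul_comul]
    simp

end AntipodeAction

section Invariants

variable {R A M N : Type*} [CommRing R] [CommRing A] [HopfAlgebra R A]
  [AddCommGroup M] [Module R M] [AddCommGroup N] [Module R N]
  {ρ : M →ₗ[R] M ⊗[R] A} {ρ' : N →ₗ[R] N ⊗[R] A}

theorem mem_comodInvariants {m : M} : m ∈ comodInvariants R A ρ ↔ ρ m = m ⊗ₜ[R] 1 :=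
  Iff.rfl

theorem map_mem_comodInvariants {f : M →ₗ[R] N} (hf : ρ' ∘ₗ f = f.rTensor A ∘ₗ ρ) {m : M}
    (hm : m ∈ comodInvariants R A ρ) : f m ∈ comodInvariants R A ρ' := by
  rw [mem_comodInvariants] at hm ⊢
  simpa [hm] using LinearMap.congr_fun hf m

end Invariants

section Reynolds

variable {R A B M N : Type*} [CommRing R] [CommRing A] [HopfAlgebra R A]
  [CommRing B] [Algebra R B]
  [AddCommGroup M] [Module R M] [Module B M] [IsScalarTower R B M]
  [AddCommGroup N] [Module R N] [Module B N] [IsScalarTower R B N]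
  {ρB : B →ₐ[R] B ⊗[R] A} {α : A →ₗ[R] B}
  {ρ : M →ₗ[R] M ⊗[R] A} {ρ' : N →ₗ[R] N ⊗[R] A}

theorem reynolds_apply (α : A →ₗ[R] B) (ρ : M →ₗ[R] M ⊗[R] A) (m : M) :
    reynolds R A B M α ρ m = antipodeAction (Algebra.lsmul R R M).toLinearMap α (ρ m) := by
  have smulMB_comp : smulMB R B M ∘ₗ (α ∘ₗ HopfAlgebra.antipode R).lTensor M =
      antipodeAction (Algebra.lsmul R R M).toLinearMap α :=
    TensorProduct.ext' fun _ _ => rfl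
  exact LinearMap.congr_fun smulMB_comp (ρ m)

theorem IsTotalIntegral.reynolds_mem_comodInvariants (hα : IsTotalIntegral R A ρB α)
    (hρ : IsBAModule R A B M ρB ρ) (m : M) :
    reynolds R A B M α ρ m ∈ comodInvariants R A ρ := by
  obtain ⟨⟨coassoc, -⟩, map_smul⟩ := hρ
  have coassoc_symm : ρ.rTensor A (ρ m) =
      (TensorProduct.assoc R M A A).symm (Coalgebra.comul.lTensor M (ρ m)) :=
    (LinearEquiv.eq_symm_apply _).2 (LinearMap.congr_fun coassoc m)
  rw [mem_comodInvariants, reynolds_apply,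
    map_antipodeAction (β' := tensorAction R A B M ∘ₗ ρB.toLinearMap) ρ map_smul, coassoc_symm,
    hα.antipodeAction_lTensor_comul]

theorem reynolds_of_mem_comodInvariants (hα : α 1 = 1) {m : M}
    (hm : m ∈ comodInvariants R A ρ) : reynolds R A B M α ρ m = m := by
  simp [reynolds_apply, mem_comodInvariants.1 hm, hα]

theorem reynolds_map (α : A →ₗ[R] B) (f : M →ₗ[B] N)
    (hf : ρ' ∘ₗ f.restrictScalars R = (f.restrictScalars R).rTensor A ∘ₗ ρ) (m : M) :
    reynolds R A B N α ρ' (f m) = f (reynolds R A B M α ρ m) := by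
  have colinear : ρ' (f m) = (f.restrictScalars R).rTensor A (ρ m) := LinearMap.congr_fun hf m
  rw [reynolds_apply, reynolds_apply, colinear]
  exact (map_antipodeAction (f.restrictScalars R) f.map_smul α (ρ m)).symm

theorem IsTotalIntegral.image_comodInvariants (hα : IsTotalIntegral R A ρB α)
    (hρ : IsBAModule R A B M ρB ρ) (f : M →ₗ[B] N)
    (hf : ρ' ∘ₗ f.restrictScalars R = (f.restrictScalars R).rTensor A ∘ₗ ρ) :
    f '' comodInvariants R A ρ = comodInvariants R A ρ' ∩ Set.range f := by
  apply Set.Subset.antisymm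
  · rintro _ ⟨m, hm, rfl⟩
    exact ⟨map_mem_comodInvariants hf hm, m, rfl⟩
  · rintro _ ⟨hfm, m, rfl⟩
    refine ⟨reynolds R A B M α ρ m, hα.reynolds_mem_comodInvariants hρ m, ?_⟩
    rw [← reynolds_map α f hf, reynolds_of_mem_comodInvariants hα.1 hfm]

end Reynolds

/-- If the action is tame (a total integral `α : A → B` exists), then the functor of
invariants on `(B,A)`-modules is exact: for every short exact sequence
`0 → M₁ → M₂ → M₃ → 0` of `(B,A)`-modules, the sequence of invariants
`0 → M₁^A → M₂^A → M₃^A → 0` is exact. -/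
theorem invariants_exact_of_total_integral
    {R A B M₁ M₂ M₃ : Type*} [CommRing R] [CommRing A] [HopfAlgebra R A]
    [CommRing B] [Algebra R B]
    [AddCommGroup M₁] [Module R M₁] [Module B M₁] [IsScalarTower R B M₁]
    [AddCommGroup M₂] [Module R M₂] [Module B M₂] [IsScalarTower R B M₂]
    [AddCommGroup M₃] [Module R M₃] [Module B M₃] [IsScalarTower R B M₃]
    (ρB : B →ₐ[R] B ⊗[R] A) (hB : IsComodule R A ρB.toLinearMap)
    (htame : ∃ α : A →ₗ[R] B, IsTotalIntegral R A ρB α)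
    (ρ₁ : M₁ →ₗ[R] M₁ ⊗[R] A) (h₁ : IsBAModule R A B M₁ ρB ρ₁)
    (ρ₂ : M₂ →ₗ[R] M₂ ⊗[R] A) (h₂ : IsBAModule R A B M₂ ρB ρ₂)
    (ρ₃ : M₃ →ₗ[R] M₃ ⊗[R] A) (h₃ : IsBAModule R A B M₃ ρB ρ₃)
    (f : M₁ →ₗ[B] M₂)
    (hf : ρ₂ ∘ₗ (f.restrictScalars R) = ((f.restrictScalars R).rTensor A) ∘ₗ ρ₁)
    (g : M₂ →ₗ[B] M₃)
    (hg : ρ₃ ∘ₗ (g.restrictScalars R) = ((g.restrictScalars R).rTensor A) ∘ₗ ρ₂)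
    (hinj : Function.Injective f)
    (hsurj : Function.Surjective g)
    (hexact : LinearMap.range f = LinearMap.ker g) :
    Set.InjOn f (comodInvariants R A ρ₁) ∧
    (f '' comodInvariants R A ρ₁ = {m ∈ comodInvariants R A ρ₂ | g m = 0}) ∧
    (g '' comodInvariants R A ρ₂ = comodInvariants R A ρ₃) := by
  obtain ⟨α, hα⟩ := htame
  refine ⟨hinj.injOn, ?_, ?_⟩
  · have range_eq : Set.range f = {m | g m = 0} := congrArg SetLike.coe hexact
    rw [hα.image_comodInvariants h₁ f hf, range_eq]
    rfl
  · rw [hα.image_comodInvariants h₂ g hg, hsurj.range_eq, Set.inter_univ]
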